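/- arXiv:1902.07325 — 2 statements merged into one kernel-verified Lean document; each statement's English description precedes it below -/
import Mathlib

section
/- (Zaslavsky's formula for bounded regions) For any hyperplane arrangement 𝒜 in ℝ^n, the number of essentially bounded chambers of 𝒜 equals (−1)^{rk(𝒜)} χ(𝒜, 1) = (−1)^{rk(𝒜)} Σ_Y μ(Y, ⊤), the sum over all flats Y of 𝒜. -/
open Finset MeasureTheory

noncomputable section

namespace CharElts

/-- Ambient Euclidean space `ℝ^n`. -/
abbrev V (n : ℕ) := EuclideanSpace ℝ (Fin n)

/-- An affine functional on `ℝ^n`; a hyperplane is its zero set. -/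
abbrev AffForm (n : ℕ) := V n →ᵃ[ℝ] ℝ

/-- The hyperplane determined by an affine functional. -/
def hypSet {n : ℕ} (ℓ : AffForm n) : Set (V n) := {x | ℓ x = 0}

variable {n : ℕ} (𝒜 : Finset (AffForm n))

/-- Index type for the hyperplanes of the arrangement. -/
abbrev Idx := {ℓ : AffForm n // ℓ ∈ 𝒜}

/-- The (possibly empty) set cut out by a sign vector `σ`. -/
def faceSet (σ : Idx 𝒜 → SignType) : Set (V n) :=
  {x | ∀ ℓ : Idx 𝒜, SignType.sign (ℓ.1 x) = σ ℓ}

/-- A face of the arrangement: a sign vector whose face set is nonempty. -/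
@[ext] structure Face where
  sgn : Idx 𝒜 → SignType
  nonempty : (faceSet 𝒜 sgn).Nonempty

open Classical in
instance : Fintype (Face 𝒜) :=
  Fintype.ofInjective Face.sgn (fun F G h => by cases F; cases G; simpa using h)

/-- The underlying point set of a face. -/
def Face.carrier (F : Face 𝒜) : Set (V n) := faceSet 𝒜 F.sgn

/-- A flat: a nonempty intersection of some subcollection of the hyperplanes
(the empty intersection gives all of `ℝ^n`). -/
def IsFlat (X : Set (V n)) : Prop :=
  X.Nonempty ∧ ∃ P : Idx 𝒜 → Prop, X = ⋂ ℓ ∈ {ℓ : Idx 𝒜 | P ℓ}, hypSet ℓ.1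

/-- The poset of flats, ordered by inclusion. -/
def Flat := {X : Set (V n) // IsFlat 𝒜 X}

instance : PartialOrder (Flat 𝒜) :=
  inferInstanceAs (PartialOrder {X : Set (V n) // IsFlat 𝒜 X})

lemma flat_eq_inter (X : Flat 𝒜) :
    X.1 = ⋂ ℓ ∈ {ℓ : Idx 𝒜 | X.1 ⊆ hypSet ℓ.1}, hypSet ℓ.1 := by
  obtain ⟨Z, hne, P, rfl⟩ := X
  apply subset_antisymm
  · intro x hx
    simp only [Set.mem_iInter, Set.mem_setOf_eq]
    intro ℓ hℓ
    exact hℓ hx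
  · intro x hx
    simp only [Set.mem_iInter, Set.mem_setOf_eq] at hx ⊢
    intro ℓ hℓ
    refine hx ℓ ?_
    intro y hy
    simp only [Set.mem_iInter, Set.mem_setOf_eq] at hy
    exact hy ℓ hℓ

open Classical in
instance : Fintype (Flat 𝒜) :=
  Fintype.ofInjective (fun X : Flat 𝒜 => {ℓ : Idx 𝒜 | X.1 ⊆ hypSet ℓ.1}) <| by
    intro X Y h
    dsimp only at h
    apply Subtype.ext
    rw [flat_eq_inter 𝒜 X, flat_eq_inter 𝒜 Y, h]

/-- The top flat: the whole ambient space. -/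
def topFlat : Flat 𝒜 :=
  ⟨Set.univ, ⟨⟨0, trivial⟩, fun _ => False, by simp⟩⟩

/-- The support of a face: the intersection of the hyperplanes on which it lies. -/
def supp (F : Face 𝒜) : Flat 𝒜 :=
  ⟨⋂ ℓ ∈ {ℓ : Idx 𝒜 | F.sgn ℓ = 0}, hypSet ℓ.1, by
    constructor
    · obtain ⟨x, hx⟩ := F.nonempty
      refine ⟨x, ?_⟩
      simp only [Set.mem_iInter, Set.mem_setOf_eq]
      intro ℓ hℓ
      have h0 := hx ℓ
      rw [hℓ] at h0
      simpa [hypSet, sign_eq_zero_iff] using h0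
    · exact ⟨fun ℓ => F.sgn ℓ = 0, rfl⟩⟩

/-- The dimension of (the affine hull of) a subset of `ℝ^n`. -/
def dimS (X : Set (V n)) : ℕ := Module.finrank ℝ (vectorSpan ℝ X)

open Classical in
/-- An element `w = Σ_F w^F H_F` of the Tits algebra (recorded by its coefficient
vector) is *characteristic of parameter `t`* if for every flat `X`, the sum of the
coefficients of the faces with support contained in `X` equals `t ^ rk X`,
where `rk X = dim X - d` and `d` is the common dimension of the minimal flats. -/
def IsCharacteristic (d : ℕ) (w : Face 𝒜 → ℝ) (t : ℝ) : Prop :=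
  ∀ X : Flat 𝒜,
    (∑ F : Face 𝒜, if (supp 𝒜 F).1 ⊆ X.1 then w F else 0) = t ^ (dimS X.1 - d)

/-- The sign vector of the Tits product `FG` of two faces. -/
def combineSgn {I : Type*} (σ τ : I → SignType) : I → SignType :=
  fun ℓ => if σ ℓ = 0 then τ ℓ else σ ℓ

open Classical in
/-- The product of the Tits algebra, on coefficient vectors:
`(u·v)^C = Σ_{F,G : FG = C} u^F v^G`, extending `H_F · H_G = H_{FG}` bilinearly. -/
def mulT (u v : Face 𝒜 → ℝ) : Face 𝒜 → ℝ :=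
  fun C => ∑ F : Face 𝒜, ∑ G : Face 𝒜,
    if combineSgn F.sgn G.sgn = C.sgn then u F * v G else 0

open Classical in
/-- The basis element `H_F` of the Tits algebra, as a coefficient vector. -/
def unitV (F : Face 𝒜) : Face 𝒜 → ℝ := fun G => if G = F then 1 else 0

/-- A chamber: a face whose sign vector is nowhere zero. -/
def IsChamber (F : Face 𝒜) : Prop := ∀ ℓ : Idx 𝒜, F.sgn ℓ ≠ 0

open Classical in
/-- `IsMoebius 𝒜 μ` states that `μ` is the Möbius function of the poset of
flats of `𝒜` (these conditions determine `μ` uniquely). -/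
def IsMoebius (μ : Flat 𝒜 → Flat 𝒜 → ℝ) : Prop :=
  (∀ X, μ X X = 1) ∧
  (∀ X Y : Flat 𝒜, X < Y →
    (∑ Z : Flat 𝒜, if X ≤ Z ∧ Z ≤ Y then μ X Z else 0) = 0) ∧
  (∀ X Y : Flat 𝒜, ¬ X ≤ Y → μ X Y = 0)

open Classical in
/-- `χ(𝒜^X, t) = Σ_{Y ≤ X} μ(Y, X) t^{rk Y}`: the characteristic polynomial of the
arrangement under the flat `X`.  Taking `X = ⊤` gives the characteristic
polynomial of `𝒜` itself. -/
def charPolyUnder (μ : Flat 𝒜 → Flat 𝒜 → ℝ) (d : ℕ) (X : Flat 𝒜) (t : ℝ) : ℝ :=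
  ∑ Y : Flat 𝒜, if Y ≤ X then μ Y X * t ^ (dimS Y.1 - d) else 0

/-- The space of directions `L = ⋂_{H ∈ 𝒜} dir(H)`: the intersection of the kernels of
the linear parts of the defining functionals. -/
def dirL : Submodule ℝ (V n) := ⨅ ℓ : Idx 𝒜, LinearMap.ker ℓ.1.linear

/-- A face is essentially bounded if its image in `ℝ^n / L` is bounded. -/
def EssBounded (F : Face 𝒜) : Prop :=
  Bornology.IsBounded ((dirL 𝒜).mkQ '' F.carrier)

/-- A hyperplane (zero set of a nonconstant affine functional) is nonempty. -/
lemma hyp_nonempty (ℓ : AffForm n) (h : ℓ.linear ≠ 0) : (hypSet ℓ).Nonempty := by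
  obtain ⟨v, hv⟩ : ∃ v, ℓ.linear v ≠ 0 := by
    by_contra hc
    push_neg at hc
    exact h (LinearMap.ext fun v => hc v)
  refine ⟨((-ℓ 0) / (ℓ.linear v)) • v, ?_⟩
  have hdecomp : ℓ (((-ℓ 0) / (ℓ.linear v)) • v)
      = ℓ.linear (((-ℓ 0) / (ℓ.linear v)) • v) + ℓ 0 := by
    conv_lhs => rw [show ((-ℓ 0) / (ℓ.linear v)) • v = ((-ℓ 0) / (ℓ.linear v)) • v +ᵥ (0 : V n)
      from (add_zero _).symm]
    rw [AffineMap.map_vadd]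
    rfl
  show ℓ _ = 0
  rw [hdecomp, LinearMap.map_smul, smul_eq_mul, div_mul_cancel₀ _ hv, neg_add_cancel]

/-!
Weight each face `F` by `(-1) ^ dim F` times the Euler characteristic with compact supports of its
recession cone. Euler characteristics of cones are additive under cutting by a hyperplane, so the
weights of the pieces into which the hyperplanes cut a convex cell add up to the weight of the cell.
A flat has weight `1`: its recession cone is its direction space, and the two signs cancel. Hence
the weights of the faces contained in any flat add up to `1`, and Möbius inversion over the poset of
flats shows that the weights of the chambers alone add up to `∑ Y, μ Y ⊤`. The recession cone of a
chamber is a linear subspace, necessarily the space `L` of common directions of the hyperplanes,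
exactly when the chamber is essentially bounded; so a chamber has weight `(-1) ^ (n - dim L)` if it
is essentially bounded and `0` otherwise.
-/

section ConeEuler

variable {E : Type*} [AddCommGroup E] [Module ℝ E]

/-- The closure of the set of reals of sign `s`, as a cone: `{0}`, `[0, ∞)` or `(-∞, 0]`. -/
def closedSide : SignType → PointedCone ℝ ℝ
  | 0 => ⊥
  | 1 => PointedCone.positive ℝ ℝ
  | -1 => (PointedCone.positive ℝ ℝ).comap (-LinearMap.id)

theorem mem_closedSide_zero {r : ℝ} : r ∈ closedSide 0 ↔ r = 0 :=
  Submodule.mem_bot _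

theorem mem_closedSide_one {r : ℝ} : r ∈ closedSide 1 ↔ 0 ≤ r :=
  PointedCone.mem_positive ℝ ℝ

theorem mem_closedSide_neg_one {r : ℝ} : r ∈ closedSide (-1) ↔ r ≤ 0 :=
  neg_nonneg (a := r)

theorem eq_zero_of_mem_closedSide {s : SignType} {r : ℝ} (hr : r ∈ closedSide s)
    (hr' : -r ∈ closedSide s) : r = 0 := by
  cases s <;>
    simp_all [mem_closedSide_zero, mem_closedSide_one, mem_closedSide_neg_one, le_antisymm_iff]

theorem mem_closedSide_sign_iff {c r : ℝ} :
    r ∈ closedSide (SignType.sign c) ↔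
      ∀ t : ℝ, 0 ≤ t → SignType.sign (c + t * r) = SignType.sign c := by
  rcases lt_trichotomy c 0 with hc | rfl | hc
  · rw [sign_neg hc, mem_closedSide_neg_one]
    refine ⟨fun hr t ht => sign_neg (by nlinarith), fun h => not_lt.1 fun hr => ?_⟩
    have := h (-c / r) (div_nonneg (neg_nonneg.2 hc.le) hr.le)
    rw [div_mul_cancel₀ _ hr.ne', add_neg_cancel, sign_zero] at this
    exact absurd this (by decide)
  · rw [sign_zero, mem_closedSide_zero]
    refine ⟨fun hr t _ => by simp [hr], fun h => ?_⟩
    simpa using h 1 zero_le_one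
  · rw [sign_pos hc, mem_closedSide_one]
    refine ⟨fun hr t ht => sign_pos (by positivity), fun h => not_lt.1 fun hr => ?_⟩
    have := h (-c / r) (div_nonneg_of_nonpos (neg_nonpos.2 hc.le) hr.le)
    rw [div_mul_cancel₀ _ hr.ne, add_neg_cancel, sign_zero] at this
    exact absurd this (by decide)

theorem finrank_inf_ker_add_one {K M : Type*} [Field K] [AddCommGroup M] [Module K M]
    [FiniteDimensional K M] {W : Submodule K M} {f : M →ₗ[K] K} (h : ∃ v ∈ W, f v ≠ 0) :
    Module.finrank K (W ⊓ LinearMap.ker f : Submodule K M) + 1 = Module.finrank K W := by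
  obtain ⟨v, hv, hfv⟩ := h
  have hf : f.domRestrict W ≠ 0 := fun h0 => hfv (LinearMap.congr_fun h0 ⟨v, hv⟩)
  rw [← Module.Dual.finrank_ker_add_one_of_ne_zero hf, LinearMap.ker_domRestrict,
    ← Submodule.map_comap_subtype, Submodule.finrank_map_subtype_eq]

theorem lineal_inf_comap_closedSide (R : PointedCone ℝ E) (f : E →ₗ[ℝ] ℝ) (s : SignType) :
    (R ⊓ (closedSide s).comap f).lineal = R.lineal ⊓ LinearMap.ker f := by
  ext v
  simp only [PointedCone.mem_lineal, Submodule.mem_inf, PointedCone.mem_comap, map_neg,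
    LinearMap.mem_ker]
  refine ⟨fun ⟨⟨hv, hf⟩, hv', hf'⟩ => ⟨⟨hv, hv'⟩, eq_zero_of_mem_closedSide hf hf'⟩, ?_⟩
  rintro ⟨⟨hv, hv'⟩, hf⟩
  simp only [hf, neg_zero, zero_mem, and_true]
  exact ⟨hv, hv'⟩

/-- A cone is linear if it is a linear subspace, i.e. equals its own lineality space. -/
def IsLinearCone (R : PointedCone ℝ E) : Prop :=
  ∀ v ∈ R, -v ∈ R

open Classical in
/-- The Euler characteristic with compact supports of a closed polyhedral cone: `(-1) ^ dim R` if
`R` is a linear subspace, and `0` otherwise. -/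
def coneEuler (R : PointedCone ℝ E) : ℝ :=
  if IsLinearCone R then (-1) ^ Module.finrank ℝ R.lineal else 0

variable {R : PointedCone ℝ E} {f : E →ₗ[ℝ] ℝ}

theorem isLinearCone_inf_comap_closedSide_iff {s : SignType} :
    IsLinearCone (R ⊓ (closedSide s).comap f) ↔
      ∀ v ∈ R, f v ∈ closedSide s → -v ∈ R ∧ f v = 0 := by
  refine ⟨fun h v hv hfv => ?_, fun h v ⟨hv, hfv⟩ => ?_⟩
  · obtain ⟨hv', hfv'⟩ := h v ⟨hv, hfv⟩
    exact ⟨hv', eq_zero_of_mem_closedSide hfv (map_neg f v ▸ hfv')⟩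
  · obtain ⟨hv', hfv'⟩ := h v hv hfv
    exact ⟨hv', by simp [hfv']⟩

theorem isLinearCone_halves_iff (hf : ∀ v ∈ R.lineal, f v = 0) :
    IsLinearCone (R ⊓ (closedSide 1).comap f) ∧ IsLinearCone (R ⊓ (closedSide (-1)).comap f) ↔
      IsLinearCone R := by
  simp only [isLinearCone_inf_comap_closedSide_iff, mem_closedSide_one, mem_closedSide_neg_one]
  refine ⟨fun ⟨hpos, hneg⟩ v hv => ?_, fun h => ⟨fun v hv _ => ?_, fun v hv _ => ?_⟩⟩
  · exact (le_total 0 (f v)).elim (fun h => (hpos v hv h).1) (fun h => (hneg v hv h).1)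
  · exact ⟨h v hv, hf v ⟨hv, h v hv⟩⟩
  · exact ⟨h v hv, hf v ⟨hv, h v hv⟩⟩

-- If `u` and `v` witness that neither half is linear, then the point of the segment between them
-- on the hyperplane witnesses that the section is not linear either.
theorem isLinearCone_section_iff (hf : ∀ v ∈ R.lineal, f v = 0) :
    IsLinearCone (R ⊓ (closedSide 0).comap f) ↔
      IsLinearCone (R ⊓ (closedSide 1).comap f) ∨ IsLinearCone (R ⊓ (closedSide (-1)).comap f) := by
  simp only [isLinearCone_inf_comap_closedSide_iff, mem_closedSide_zero, mem_closedSide_one,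
    mem_closedSide_neg_one]
  refine ⟨fun h => ?_, ?_⟩
  · by_contra! hcon
    obtain ⟨⟨u, hu, hfu, hu'⟩, v, hv, hfv, hv'⟩ := hcon
    have hfu : 0 < f u := hfu.lt_of_ne' fun h0 => hu' (h u hu h0).1 h0
    have hfv : f v < 0 := hfv.lt_of_ne fun h0 => hv' (h v hv h0).1 h0
    have hw : -f v • u + f u • v ∈ R :=
      add_mem (R.smul_mem (neg_nonneg.2 hfv.le) hu) (R.smul_mem hfu.le hv)
    have hw' : -(-f v • u + f u • v) ∈ R := (h _ hw (by simp; ring)).1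
    have hnu : -u ∈ R := by
      have := R.smul_mem (inv_nonneg.2 (neg_nonneg.2 hfv.le)) (add_mem hw' (R.smul_mem hfu.le hv))
      rwa [neg_add, neg_add_cancel_right, ← smul_neg, inv_smul_smul₀ (neg_ne_zero.2 hfv.ne)] at this
    exact hfu.ne' (hf u ⟨hu, hnu⟩)
  · rintro (h | h) v hv hfv
    · exact h v hv hfv.ge
    · exact h v hv hfv.le

theorem coneEuler_halves_of_lineal_le_ker (hf : ∀ v ∈ R.lineal, f v = 0) :
    coneEuler (R ⊓ (closedSide 1).comap f) + coneEuler (R ⊓ (closedSide (-1)).comap f) =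
      coneEuler (R ⊓ (closedSide 0).comap f) + coneEuler R := by
  have hlineal : R.lineal ⊓ LinearMap.ker f = R.lineal := inf_eq_left.2 hf
  rw [coneEuler, coneEuler, coneEuler, coneEuler, lineal_inf_comap_closedSide,
    lineal_inf_comap_closedSide, lineal_inf_comap_closedSide, hlineal, isLinearCone_section_iff hf,
    ← isLinearCone_halves_iff hf]
  by_cases hpos : IsLinearCone (R ⊓ (closedSide 1).comap f) <;>
    by_cases hneg : IsLinearCone (R ⊓ (closedSide (-1)).comap f) <;> simp [hpos, hneg]

theorem isLinearCone_section_iff_of_mem_lineal (hf : ∃ v ∈ R.lineal, f v ≠ 0) :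
    IsLinearCone (R ⊓ (closedSide 0).comap f) ↔ IsLinearCone R := by
  simp only [isLinearCone_inf_comap_closedSide_iff, mem_closedSide_zero]
  refine ⟨fun h v hv => ?_, fun h v hv hfv => ⟨h v hv, hfv⟩⟩
  obtain ⟨u, hu, hfu⟩ := hf
  have hcu : (f v / f u) • u ∈ R.lineal := R.lineal.smul_mem _ hu
  have := (h (v + -((f v / f u) • u)) (add_mem hv hcu.2) (by simp [hfu])).1
  simpa using add_mem this hcu.2

theorem coneEuler_halves_of_mem_lineal [FiniteDimensional ℝ E] (hf : ∃ v ∈ R.lineal, f v ≠ 0) :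
    coneEuler (R ⊓ (closedSide 1).comap f) + coneEuler (R ⊓ (closedSide (-1)).comap f) =
      coneEuler (R ⊓ (closedSide 0).comap f) + coneEuler R := by
  obtain ⟨u, hu, hfu⟩ := hf
  have hhalf (s : SignType) (hs : f u ∈ closedSide s ∨ f (-u) ∈ closedSide s) :
      coneEuler (R ⊓ (closedSide s).comap f) = 0 := by
    refine if_neg fun h => ?_
    rw [isLinearCone_inf_comap_closedSide_iff] at h
    rcases hs with hs | hs
    · exact hfu (h u hu.1 hs).2
    · exact hfu (by simpa using (h (-u) hu.2 hs).2)
  rw [hhalf 1, hhalf (-1), coneEuler, coneEuler, lineal_inf_comap_closedSide,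
    ← finrank_inf_ker_add_one ⟨u, hu, hfu⟩, isLinearCone_section_iff_of_mem_lineal ⟨u, hu, hfu⟩]
  · split_ifs <;> ring
  · simpa [mem_closedSide_neg_one] using le_total (f u) 0
  · simpa [mem_closedSide_one] using le_total 0 (f u)

theorem coneEuler_halves [FiniteDimensional ℝ E] (R : PointedCone ℝ E) (f : E →ₗ[ℝ] ℝ) :
    coneEuler (R ⊓ (closedSide 1).comap f) + coneEuler (R ⊓ (closedSide (-1)).comap f) =
      coneEuler (R ⊓ (closedSide 0).comap f) + coneEuler R := by
  by_cases hf : ∀ v ∈ R.lineal, f v = 0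
  · exact coneEuler_halves_of_lineal_le_ker hf
  · exact coneEuler_halves_of_mem_lineal (by push Not at hf; exact hf)

end ConeEuler

section Cells

open Filter Topology

variable {E : Type*} [AddCommGroup E] [Module ℝ E]

/-- The recession cone of `C`: the directions in which every point of `C` escapes to infinity
inside `C`. -/
def recessionCone (C : Set E) : PointedCone ℝ E where
  carrier := {v | ∀ x ∈ C, ∀ t : ℝ, 0 ≤ t → x + t • v ∈ C}
  zero_mem' x hx t _ := by simpa using hx
  add_mem' {v w} hv hw x hx t ht := by
    rw [smul_add, ← add_assoc]
    exact hw _ (hv x hx t ht) t ht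
  smul_mem' c v hv x hx t ht := by
    rw [show c • v = (c : ℝ) • v from rfl, smul_smul]
    exact hv x hx _ (mul_nonneg ht c.2)

theorem mem_recessionCone {C : Set E} {v : E} :
    v ∈ recessionCone C ↔ ∀ x ∈ C, ∀ t : ℝ, 0 ≤ t → x + t • v ∈ C :=
  Iff.rfl

/-- A cell: a convex set that is open in its affine span, in the algebraic sense that one can move
a little from each of its points in every direction of that span. -/
structure IsCell (C : Set E) : Prop where
  convex : Convex ℝ C
  eventually_mem : ∀ x ∈ C, ∀ v ∈ vectorSpan ℝ C, ∀ᶠ t in 𝓝 (0 : ℝ), x + t • v ∈ C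

theorem mem_vectorSpan_of_eventually {C : Set E} {x v : E}
    (h : ∀ᶠ t in 𝓝 (0 : ℝ), x + t • v ∈ C) : v ∈ vectorSpan ℝ C := by
  obtain ⟨t, ht, ht0⟩ := ((h.filter_mono nhdsWithin_le_nhds).and
    (self_mem_nhdsWithin : ∀ᶠ t in 𝓝[≠] (0 : ℝ), t ≠ 0)).exists
  have hx : x ∈ C := by simpa using h.self_of_nhds
  simpa [Submodule.smul_mem_iff _ ht0] using vsub_mem_vectorSpan ℝ ht hx

namespace IsCell

variable {C D : Set E} {x v : E}

theorem inter (hC : IsCell C) (hD : IsCell D) : IsCell (C ∩ D) where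
  convex := hC.convex.inter hD.convex
  eventually_mem x hx v hv :=
    (hC.eventually_mem x hx.1 v (vectorSpan_mono ℝ Set.inter_subset_left hv)).and
      (hD.eventually_mem x hx.2 v (vectorSpan_mono ℝ Set.inter_subset_right hv))

theorem vectorSpan_inter (hC : IsCell C) (hD : IsCell D) (h : (C ∩ D).Nonempty) :
    vectorSpan ℝ (C ∩ D) = vectorSpan ℝ C ⊓ vectorSpan ℝ D := by
  obtain ⟨x, hxC, hxD⟩ := h
  refine le_antisymm (le_inf (vectorSpan_mono ℝ Set.inter_subset_left)
    (vectorSpan_mono ℝ Set.inter_subset_right)) fun v ⟨hvC, hvD⟩ => ?_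
  exact mem_vectorSpan_of_eventually
    ((hC.eventually_mem x hxC v hvC).and (hD.eventually_mem x hxD v hvD))

-- Extend the segment from `x` to `y` slightly beyond `y`, to `z`; then `y + t • v` lies on a
-- segment from `z` to a point of the given ray.
theorem mem_recessionCone_of_ray (hC : IsCell C) (hx : x ∈ C)
    (hv : ∀ t : ℝ, 0 ≤ t → x + t • v ∈ C) : v ∈ recessionCone C := by
  intro y hy t ht
  obtain ⟨ε, hz, hε⟩ := (((hC.eventually_mem y hy (y - x)
    (vsub_mem_vectorSpan ℝ hy hx)).filter_mono nhdsWithin_le_nhds).and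
    (self_mem_nhdsWithin : ∀ᶠ ε in 𝓝[>] (0 : ℝ), 0 < ε)).exists
  have h1ε : 0 < 1 + ε := by linarith
  convert hC.convex hz (hv (t * ((1 + ε) / ε)) (by positivity))
    (inv_nonneg.2 h1ε.le) (div_nonneg hε.le h1ε.le) (by field_simp) using 1
  match_scalars <;> field_simp
  ring

theorem recessionCone_inter (hC : IsCell C) (hD : IsCell D) (h : (C ∩ D).Nonempty) :
    recessionCone (C ∩ D) = recessionCone C ⊓ recessionCone D := by
  obtain ⟨x, hxC, hxD⟩ := h
  refine le_antisymm (fun v hv => ?_) fun v ⟨hvC, hvD⟩ y hy t ht =>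
    ⟨hvC y hy.1 t ht, hvD y hy.2 t ht⟩
  exact ⟨hC.mem_recessionCone_of_ray hxC fun t ht => (hv x ⟨hxC, hxD⟩ t ht).1,
    hD.mem_recessionCone_of_ray hxD fun t ht => (hv x ⟨hxC, hxD⟩ t ht).2⟩

end IsCell

/-- The set where an affine functional has a given sign: a hyperplane or an open half-space. -/
def signSet (h : E →ᵃ[ℝ] ℝ) (s : SignType) : Set E :=
  {x | SignType.sign (h x) = s}

theorem mem_signSet {h : E →ᵃ[ℝ] ℝ} {s : SignType} {x : E} :
    x ∈ signSet h s ↔ SignType.sign (h x) = s :=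
  Iff.rfl

theorem affineMap_add_smul (h : E →ᵃ[ℝ] ℝ) (x v : E) (t : ℝ) :
    h (x + t • v) = h x + t * h.linear v := by
  rw [add_comm x, ← vadd_eq_add, h.map_vadd, map_smul, smul_eq_mul, vadd_eq_add, add_comm]

variable {h : E →ᵃ[ℝ] ℝ} {s : SignType} {x : E}

theorem eventually_mem_signSet (hx : x ∈ signSet h s) {v : E} (hv : s = 0 → h.linear v = 0) :
    ∀ᶠ t in 𝓝 (0 : ℝ), x + t • v ∈ signSet h s := by
  obtain rfl : SignType.sign (h x) = s := hx
  simp only [mem_signSet, affineMap_add_smul]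
  rcases eq_or_ne (h x) 0 with h0 | h0
  · simp [hv (by simp [h0])]
  · have hcont : ContinuousAt (fun t : ℝ => SignType.sign (h x + t * h.linear v)) 0 :=
      ContinuousAt.comp (g := SignType.sign) (continuousAt_sign_of_ne_zero (by simpa using h0))
        (by fun_prop)
    simpa using hcont.eventually_mem ((isOpen_discrete {_}).mem_nhds rfl)

theorem mem_vectorSpan_signSet (hx : x ∈ signSet h s) {v : E} :
    v ∈ vectorSpan ℝ (signSet h s) ↔ (s = 0 → h.linear v = 0) := by
  refine ⟨?_, fun hv => mem_vectorSpan_of_eventually (eventually_mem_signSet hx hv)⟩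
  rintro hv rfl
  suffices vectorSpan ℝ (signSet h 0) ≤ LinearMap.ker h.linear from this hv
  refine Submodule.span_le.2 ?_
  rintro _ ⟨y, hy, z, hz, rfl⟩
  rw [mem_signSet, sign_eq_zero_iff] at hy hz
  rw [SetLike.mem_coe, LinearMap.mem_ker, h.linearMap_vsub, hy, hz, vsub_self]

theorem isCell_signSet (h : E →ᵃ[ℝ] ℝ) (s : SignType) : IsCell (signSet h s) where
  convex :=
    (Set.ordConnected_singleton.preimage_mono SignType.sign.monotone).convex.affine_preimage h
  eventually_mem _ hx _ hv := eventually_mem_signSet hx ((mem_vectorSpan_signSet hx).1 hv)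

theorem recessionCone_signSet (hne : (signSet h s).Nonempty) :
    recessionCone (signSet h s) = (closedSide s).comap h.linear := by
  obtain ⟨x, rfl⟩ := hne
  ext v
  rw [PointedCone.mem_comap, mem_closedSide_sign_iff]
  simp only [← affineMap_add_smul]
  exact ⟨fun hv t ht => hv x rfl t ht, (isCell_signSet h _).mem_recessionCone_of_ray rfl⟩

theorem exists_eq_zero_of_convex {C : Set E} (hC : Convex ℝ C) {x y : E} (hx : x ∈ C) (hy : y ∈ C)
    (hxy : SignType.sign (h x) ≠ SignType.sign (h y)) : ∃ z ∈ C, h z = 0 := by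
  wlog hle : h x ≤ h y generalizing x y
  · exact this hy hx hxy.symm (le_of_not_ge hle)
  have h0 : h x ≤ 0 ∧ 0 ≤ h y := by
    by_contra hcon
    rcases not_and_or.1 hcon with hpos | hneg
    · exact hxy (by rw [sign_pos (not_le.1 hpos), sign_pos ((not_le.1 hpos).trans_le hle)])
    · exact hxy (by rw [sign_neg (not_le.1 hneg), sign_neg (hle.trans_lt (not_le.1 hneg))])
  exact (hC.affine_image h).ordConnected.out (Set.mem_image_of_mem h hx)
    (Set.mem_image_of_mem h hy) h0

-- From a zero `z` of `h` on `C` one can move within `C` away from any other point `y` of `C`, and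
-- there `h` has the sign opposite to that of `h y`.
theorem IsCell.subset_signSet_or_forall_nonempty {C : Set E} (hC : IsCell C) (h : E →ᵃ[ℝ] ℝ) :
    (∃ s, C ⊆ signSet h s) ∨ ∀ s, (C ∩ signSet h s).Nonempty := by
  by_contra! hcon
  obtain ⟨hconst, s, hs⟩ := hcon
  obtain ⟨x, hx, -⟩ := Set.not_subset.1 (hconst 0)
  obtain ⟨x', hx', hxx'⟩ := Set.not_subset.1 (hconst (SignType.sign (h x)))
  obtain ⟨z, hz, hz0⟩ := exists_eq_zero_of_convex hC.convex hx' hx hxx'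
  obtain ⟨y, hy, hy0⟩ := Set.not_subset.1 (hconst 0)
  obtain ⟨t, hzt, ht⟩ := (((hC.eventually_mem z hz (y - z)
    (vsub_mem_vectorSpan ℝ hy hz)).filter_mono nhdsWithin_le_nhds).and
    (self_mem_nhdsWithin : ∀ᶠ t in 𝓝[<] (0 : ℝ), t < 0)).exists
  have hht : SignType.sign (h (z + t • (y - z))) = -SignType.sign (h y) := by
    rw [affineMap_add_smul, hz0, ← vsub_eq_sub, h.linearMap_vsub, hz0, zero_add, vsub_eq_sub,
      sub_zero, sign_mul, sign_neg ht, neg_one_mul]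
  have hsign : ∀ σ τ : SignType, τ ≠ 0 → σ = 0 ∨ σ = τ ∨ σ = -τ := by decide
  suffices (C ∩ signSet h s).Nonempty from this.ne_empty hs
  rcases hsign s _ hy0 with rfl | rfl | rfl
  · exact ⟨z, hz, by rw [mem_signSet, hz0, sign_zero]⟩
  · exact ⟨y, hy, rfl⟩
  · exact ⟨_, hzt, hht⟩

end Cells

section CellWeight

variable {E : Type*} [AddCommGroup E] [Module ℝ E]

open Classical in
/-- The weight of a cell `C`: the sign `(-1) ^ dim C` times the Euler characteristic of its
recession cone. The empty set has weight `0`. -/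
def cellWeight (C : Set E) : ℝ :=
  if C.Nonempty then (-1) ^ Module.finrank ℝ (vectorSpan ℝ C) * coneEuler (recessionCone C) else 0

theorem cellWeight_empty : cellWeight (∅ : Set E) = 0 :=
  if_neg Set.not_nonempty_empty

theorem cellWeight_of_nonempty {C : Set E} (hC : C.Nonempty) :
    cellWeight C =
      (-1) ^ Module.finrank ℝ (vectorSpan ℝ C) * coneEuler (recessionCone C) :=
  if_pos hC

theorem recessionCone_affineSubspace (S : AffineSubspace ℝ E) (hS : (S : Set E).Nonempty) :
    recessionCone (S : Set E) = PointedCone.ofSubmodule S.direction := by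
  obtain ⟨p, hp⟩ := hS
  ext v
  refine ⟨fun hv => ?_, fun hv x hx t _ => ?_⟩
  · simpa using AffineSubspace.vsub_mem_direction (hv p hp 1 zero_le_one) hp
  · rw [add_comm]
    exact AffineSubspace.vadd_mem_of_mem_direction (S.direction.smul_mem t hv) hx

theorem cellWeight_affineSubspace (S : AffineSubspace ℝ E) (hS : (S : Set E).Nonempty) :
    cellWeight (S : Set E) = 1 := by
  have hlinear : IsLinearCone (PointedCone.ofSubmodule S.direction) := fun v hv =>
    S.direction.neg_mem hv
  have hlineal : (PointedCone.ofSubmodule S.direction).lineal = S.direction :=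
    Submodule.ext fun v => ⟨And.left, fun hv => ⟨hv, hlinear v hv⟩⟩
  rw [cellWeight_of_nonempty hS, recessionCone_affineSubspace S hS, coneEuler, if_pos hlinear,
    hlineal, AffineSubspace.direction, ← mul_pow, neg_one_mul, neg_neg, one_pow]

theorem isCell_affineSubspace (S : AffineSubspace ℝ E) : IsCell (S : Set E) where
  convex := S.convex
  eventually_mem x hx v hv := .of_forall fun t => by
    rw [add_comm]
    exact AffineSubspace.vadd_mem_of_mem_direction (S.direction.smul_mem t hv) hx

variable {C : Set E}

theorem cellWeight_inter_signSet (hC : IsCell C) {h : E →ᵃ[ℝ] ℝ} {s : SignType}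
    (hne : (C ∩ signSet h s).Nonempty) :
    cellWeight (C ∩ signSet h s) =
      (-1) ^ Module.finrank ℝ (vectorSpan ℝ C ⊓ vectorSpan ℝ (signSet h s) : Submodule ℝ E) *
        coneEuler (recessionCone C ⊓ (closedSide s).comap h.linear) := by
  rw [cellWeight_of_nonempty hne, hC.vectorSpan_inter (isCell_signSet h s) hne,
    hC.recessionCone_inter (isCell_signSet h s) hne,
    recessionCone_signSet (hne.mono Set.inter_subset_right)]

/-- The set where each functional of the family `a` has the sign prescribed by `σ`. -/
def signCell {ι : Type*} (a : ι → E →ᵃ[ℝ] ℝ) (σ : ι → SignType) : Set E :=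
  {x | ∀ i, SignType.sign (a i x) = σ i}

variable [FiniteDimensional ℝ E]

theorem sum_cellWeight_of_forall_nonempty (hC : IsCell C) {h : E →ᵃ[ℝ] ℝ}
    (hne : ∀ s, (C ∩ signSet h s).Nonempty) :
    ∑ s, cellWeight (C ∩ signSet h s) = cellWeight C := by
  obtain ⟨x, hxC, hx⟩ := hne 0
  obtain ⟨y, hyC, hy⟩ := hne 1
  have hspan_ne (s : SignType) (hs : s ≠ 0) :
      vectorSpan ℝ C ⊓ vectorSpan ℝ (signSet h s) = vectorSpan ℝ C := by
    obtain ⟨z, -, hz⟩ := hne s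
    exact inf_eq_left.2 fun v _ => (mem_vectorSpan_signSet hz).2 fun h0 => absurd h0 hs
  have hspan_zero : vectorSpan ℝ (signSet h 0) = LinearMap.ker h.linear := by
    ext v
    simp [mem_vectorSpan_signSet hx]
  have hcross : ∃ v ∈ vectorSpan ℝ C, h.linear v ≠ 0 := by
    refine ⟨y -ᵥ x, vsub_mem_vectorSpan ℝ hyC hxC, ?_⟩
    rw [mem_signSet, sign_eq_zero_iff] at hx
    rw [mem_signSet, sign_eq_one_iff] at hy
    rw [h.linearMap_vsub, hx, vsub_eq_sub, sub_zero]
    exact hy.ne'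
  rw [SignType.univ_eq, sum_insert (by decide), sum_insert (by decide), sum_singleton,
    cellWeight_inter_signSet hC (hne 0), cellWeight_inter_signSet hC (hne 1),
    cellWeight_inter_signSet hC (hne (-1)), hspan_ne 1 (by decide), hspan_ne (-1) (by decide),
    hspan_zero, cellWeight_of_nonempty ⟨x, hxC⟩, ← finrank_inf_ker_add_one hcross]
  linear_combination (-1) ^ (Module.finrank ℝ ↥(vectorSpan ℝ C ⊓ LinearMap.ker h.linear) + 1) *
    coneEuler_halves (recessionCone C) h.linear

theorem sum_cellWeight_inter_signSet (hC : IsCell C) (h : E →ᵃ[ℝ] ℝ) :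
    ∑ s, cellWeight (C ∩ signSet h s) = cellWeight C := by
  rcases hC.subset_signSet_or_forall_nonempty h with ⟨s, hs⟩ | hne
  · rw [Fintype.sum_eq_single s, Set.inter_eq_left.2 hs]
    intro s' hs'
    suffices C ∩ signSet h s' = ∅ by rw [this, cellWeight_empty]
    exact Set.eq_empty_of_forall_notMem fun x ⟨hxC, hx⟩ => hs' (hx.symm.trans (hs hxC))
  · exact sum_cellWeight_of_forall_nonempty hC hne

theorem sum_cellWeight_inter_signCell_fin {m : ℕ} (a : Fin m → E →ᵃ[ℝ] ℝ) (hC : IsCell C) :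
    ∑ σ, cellWeight (C ∩ signCell a σ) = cellWeight C := by
  induction m generalizing C with
  | zero => simp [signCell]
  | succ m ih =>
    rw [← sum_cellWeight_inter_signSet hC (a 0),
      ← (Fin.consEquiv fun _ => SignType).sum_comp, Fintype.sum_prod_type]
    refine Fintype.sum_congr _ _ fun s => ?_
    rw [← ih (a ∘ Fin.succ) (hC.inter (isCell_signSet (a 0) s))]
    refine Fintype.sum_congr _ _ fun σ => ?_
    rw [Set.inter_assoc]
    congr 2
    ext x
    simp [signCell, signSet, Fin.forall_fin_succ]

theorem sum_cellWeight_inter_signCell {ι : Type*} [Fintype ι] [DecidableEq ι]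
    (a : ι → E →ᵃ[ℝ] ℝ) (hC : IsCell C) :
    ∑ σ, cellWeight (C ∩ signCell a σ) = cellWeight C := by
  let e := Fintype.equivFin ι
  rw [← sum_cellWeight_inter_signCell_fin (a ∘ e.symm) hC]
  refine Fintype.sum_equiv (e.arrowCongr (Equiv.refl SignType)) _ _ fun σ => ?_
  congr 2
  ext x
  exact e.symm.forall_congr_right.symm

end CellWeight

section SignCells

open Filter Topology Bornology

section Algebraic

variable {E F : Type*} [AddCommGroup E] [Module ℝ E] [AddCommGroup F] [Module ℝ F]
  {ι : Type*} {a : ι → E →ᵃ[ℝ] ℝ} {σ : ι → SignType}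

theorem mem_recessionCone_signCell (hne : (signCell a σ).Nonempty) {v : E} :
    v ∈ recessionCone (signCell a σ) ↔ ∀ i, (a i).linear v ∈ closedSide (σ i) := by
  obtain ⟨x, hx⟩ := hne
  have hside (i : ι) : v ∈ recessionCone (signSet (a i) (σ i)) ↔
      (a i).linear v ∈ closedSide (σ i) := by
    rw [recessionCone_signSet ⟨x, hx i⟩, PointedCone.mem_comap]
  simp only [← hside]
  exact ⟨fun hv i => (isCell_signSet _ _).mem_recessionCone_of_ray (hx i) fun t ht =>
      hv x hx t ht i,
    fun hv y hy t ht i => hv i y (hy i) t ht⟩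

theorem vectorSpan_signCell_eq_top [Finite ι] (hne : (signCell a σ).Nonempty) (hσ : ∀ i, σ i ≠ 0) :
    vectorSpan ℝ (signCell a σ) = ⊤ := by
  obtain ⟨x, hx⟩ := hne
  exact eq_top_iff.2 fun v _ => mem_vectorSpan_of_eventually <| eventually_all.2 fun i =>
    eventually_mem_signSet (hx i) fun h => absurd h (hσ i)

theorem lineal_recessionCone_signCell (hne : (signCell a σ).Nonempty) :
    (recessionCone (signCell a σ)).lineal = ⨅ i, LinearMap.ker (a i).linear := by
  ext v
  simp only [PointedCone.mem_lineal, mem_recessionCone_signCell hne, map_neg, Submodule.mem_iInf,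
    LinearMap.mem_ker]
  exact ⟨fun hv i => eq_zero_of_mem_closedSide (hv.1 i) (hv.2 i), fun hv => by simp [hv]⟩

theorem recessionCone_preimage {f : E →ₗ[ℝ] F} (hf : Function.Surjective f) (C : Set F) :
    recessionCone (f ⁻¹' C) = (recessionCone C).comap f := by
  ext v
  simp only [PointedCone.mem_comap, mem_recessionCone, hf.forall, Set.mem_preimage, map_add,
    map_smul]

theorem exists_affineMap_mkQ_eq {L : Submodule ℝ E} {h : E →ᵃ[ℝ] ℝ}
    (hL : L ≤ LinearMap.ker h.linear) : ∃ g : (E ⧸ L) →ᵃ[ℝ] ℝ, ∀ x, g (L.mkQ x) = h x :=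
  ⟨(L.liftQ h.linear hL).toAffineMap + AffineMap.const ℝ _ (h 0), fun x =>
    (congrFun h.decomp x).symm⟩

end Algebraic

variable {E : Type*} [NormedAddCommGroup E] [NormedSpace ℝ E]

theorem recessionCone_subset_asymptoticCone {C : Set E} (hne : C.Nonempty) :
    (recessionCone C : Set E) ⊆ asymptoticCone ℝ C := by
  obtain ⟨x, hx⟩ := hne
  intro v hv
  refine ((tendsto_id.atTop_smul_const_tendsto_asymptoticNhds v).asymptoticNhds_vadd_const
    x).frequently (Eventually.frequently ?_)
  filter_upwards [eventually_ge_atTop 0] with t ht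
  rw [vadd_eq_add, add_comm]
  exact hv x hx t ht

variable [FiniteDimensional ℝ E]

theorem asymptoticCone_signSet_subset {h : E →ᵃ[ℝ] ℝ} {s : SignType}
    (hne : (signSet h s).Nonempty) :
    asymptoticCone ℝ (signSet h s) ⊆ recessionCone (signSet h s) := by
  obtain ⟨x, hx⟩ := hne
  have hconv := (isCell_signSet h s).convex
  have hcont : Continuous h := h.continuous_of_finiteDimensional
  refine fun v hv => (isCell_signSet h s).mem_recessionCone_of_ray hx fun t ht => ?_
  rw [add_comm, ← vadd_eq_add]
  rcases eq_or_ne s 0 with rfl | hs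
  · have hclosed : IsClosed (signSet h 0) := by
      simpa only [signSet, sign_eq_zero_iff] using isClosed_eq hcont continuous_const
    exact hconv.smul_vadd_mem_of_isClosed_of_mem_asymptoticCone hclosed ht hv hx
  · have hnhds : signSet h s ∈ 𝓝 x := by
      have hsign : SignType.sign (h x) = s := hx
      have hcontAt : ContinuousAt (fun y => SignType.sign (h y)) x :=
        ContinuousAt.comp (g := SignType.sign)
          (continuousAt_sign_of_ne_zero (by rwa [← sign_ne_zero, hsign])) hcont.continuousAt
      exact hcontAt.preimage_mem_nhds ((isOpen_discrete {s}).mem_nhds hx)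
    exact hconv.smul_vadd_mem_of_mem_nhds_of_mem_asymptoticCone ht hnhds hv

variable {ι : Type*} {a : ι → E →ᵃ[ℝ] ℝ} {σ : ι → SignType}

theorem asymptoticCone_signCell (hne : (signCell a σ).Nonempty) :
    asymptoticCone ℝ (signCell a σ) = recessionCone (signCell a σ) := by
  refine Set.Subset.antisymm (fun v hv => ?_) (recessionCone_subset_asymptoticCone hne)
  obtain ⟨x, hx⟩ := hne
  intro y hy t ht i
  exact asymptoticCone_signSet_subset ⟨x, hx i⟩
    (asymptoticCone_mono (fun _ (hz : _ ∈ signCell a σ) => hz i) hv) y (hy i) t ht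

theorem isBounded_signCell_iff (hne : (signCell a σ).Nonempty) :
    IsBounded (signCell a σ) ↔ ∀ v ∈ recessionCone (signCell a σ), v = 0 := by
  rw [isBounded_iff_asymptoticCone_subset_singleton, asymptoticCone_signCell hne]
  rfl

theorem isBounded_mkQ_image_signCell_iff (hne : (signCell a σ).Nonempty) :
    IsBounded ((recessionCone (signCell a σ)).lineal.mkQ '' signCell a σ) ↔
      IsLinearCone (recessionCone (signCell a σ)) := by
  generalize hL : (recessionCone (signCell a σ)).lineal = L
  have hker (i : ι) : L ≤ LinearMap.ker (a i).linear :=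
    hL ▸ lineal_recessionCone_signCell hne ▸ iInf_le _ i
  have : IsClosed (L : Set E) := L.closed_of_finiteDimensional
  choose g hg using fun i => exists_affineMap_mkQ_eq (hker i)
  have hpre : L.mkQ ⁻¹' signCell g σ = signCell a σ := by
    ext x
    simp only [signCell, Set.mem_preimage, Set.mem_ofPred_eq, hg]
  have himage : L.mkQ '' signCell a σ = signCell g σ := by
    rw [← hpre, Set.image_preimage_eq _ L.mkQ_surjective]
  have hrec (v : E) :
      L.mkQ v ∈ recessionCone (signCell g σ) ↔ v ∈ recessionCone (signCell a σ) := by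
    rw [← hpre, recessionCone_preimage L.mkQ_surjective, PointedCone.mem_comap]
  rw [himage, isBounded_signCell_iff (himage ▸ hne.image L.mkQ), L.mkQ_surjective.forall]
  refine forall_congr' fun v => ?_
  rw [hrec, Submodule.mkQ_apply, Submodule.Quotient.mk_eq_zero, ← hL]
  exact forall_congr' fun hv => and_iff_right hv

end SignCells

section Arrangement

variable {𝒜}

theorem Flat.mem_iff {X : Flat 𝒜} {x : V n} :
    x ∈ X.1 ↔ ∀ ℓ : Idx 𝒜, X.1 ⊆ hypSet ℓ.1 → ℓ.1 x = 0 := by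
  refine ⟨fun hx ℓ hℓ => hℓ hx, fun hx => ?_⟩
  rw [flat_eq_inter 𝒜 X]
  exact Set.mem_iInter₂.2 hx

/-- A flat, as an affine subspace. -/
def Flat.toAffineSubspace (X : Flat 𝒜) : AffineSubspace ℝ (V n) where
  carrier := X.1
  smul_vsub_vadd_mem' c p q r hp hq hr := by
    rw [Flat.mem_iff] at hp hq hr ⊢
    intro ℓ hℓ
    rw [AffineMap.map_vadd, map_smul, ℓ.1.linearMap_vsub, hp ℓ hℓ, hq ℓ hℓ, hr ℓ hℓ]
    simp

theorem supp_subset_iff_mem {F : Face 𝒜} {X : Flat 𝒜} {x : V n} (hx : x ∈ F.carrier) :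
    (supp 𝒜 F).1 ⊆ X.1 ↔ x ∈ X.1 := by
  refine ⟨fun h => h ?_, fun hxX y hy => Flat.mem_iff.2 fun ℓ hℓ => ?_⟩
  · exact Set.mem_iInter₂.2 fun ℓ hℓ => sign_eq_zero_iff.1 ((hx ℓ).trans hℓ)
  · exact Set.mem_iInter₂.1 hy ℓ ((hx ℓ).symm.trans (sign_eq_zero_iff.2 (hℓ hxX)))

theorem inter_carrier_eq_ite (F : Face 𝒜) (X : Flat 𝒜) [Decidable ((supp 𝒜 F).1 ⊆ X.1)] :
    X.1 ∩ F.carrier = if (supp 𝒜 F).1 ⊆ X.1 then F.carrier else ∅ := by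
  split_ifs with h
  · exact Set.inter_eq_right.2 fun x hx => (supp_subset_iff_mem hx).1 h
  · exact Set.eq_empty_of_forall_notMem fun x hx => h ((supp_subset_iff_mem hx.2).2 hx.1)

theorem isCharacteristic_cellWeight (d : ℕ) :
    IsCharacteristic 𝒜 d (fun F => cellWeight F.carrier) 1 := by
  classical
  intro X
  have hX : cellWeight X.1 = 1 := cellWeight_affineSubspace X.toAffineSubspace X.2.1
  have hsum : ∑ σ, cellWeight (X.1 ∩ faceSet 𝒜 σ) = cellWeight X.1 :=
    sum_cellWeight_inter_signCell (fun ℓ : Idx 𝒜 => ℓ.1) (isCell_affineSubspace X.toAffineSubspace)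
  rw [one_pow, ← hX, ← hsum]
  refine Fintype.sum_of_injective Face.sgn (fun _ _ => Face.ext) _ _ (fun σ hσ => ?_) fun F => ?_
  · have hempty : faceSet 𝒜 σ = ∅ :=
      Set.not_nonempty_iff_eq_empty.1 fun hne => hσ ⟨⟨σ, hne⟩, rfl⟩
    rw [hempty, Set.inter_empty, cellWeight_empty]
  · change _ = cellWeight (X.1 ∩ F.carrier)
    rw [inter_carrier_eq_ite, apply_ite cellWeight, cellWeight_empty]

open Classical in
theorem IsMoebius.sum_Ici {μ : Flat 𝒜 → Flat 𝒜 → ℝ} (hμ : IsMoebius 𝒜 μ) (S X : Flat 𝒜) :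
    ∑ Y, (if S ≤ Y then μ Y X else 0) = if S = X then 1 else 0 := by
  obtain ⟨hdiag, hsum, hzero⟩ := hμ
  let M : Matrix (Flat 𝒜) (Flat 𝒜) ℝ := .of μ
  let ζ : Matrix (Flat 𝒜) (Flat 𝒜) ℝ := .of fun X Y => if X ≤ Y then 1 else 0
  have hMζ : M * ζ = 1 := by
    ext X Y
    have hentry : (M * ζ) X Y = ∑ Z, if X ≤ Z ∧ Z ≤ Y then μ X Z else 0 := by
      simp only [Matrix.mul_apply, M, ζ, Matrix.of_apply, mul_ite, mul_one, mul_zero]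
      refine Fintype.sum_congr _ _ fun Z => ?_
      by_cases hXZ : X ≤ Z <;> simp [hXZ, hzero X Z]
    rw [hentry, Matrix.one_apply]
    by_cases hXY : X ≤ Y
    · rcases hXY.eq_or_lt with rfl | hlt
      · simp [← le_antisymm_iff, hdiag]
      · rw [hsum X Y hlt, if_neg hlt.ne]
    · rw [if_neg fun h => hXY h.le]
      exact sum_eq_zero fun Z _ => if_neg fun h => hXY (h.1.trans h.2)
  have hζM : (ζ * M) S X = (1 : Matrix (Flat 𝒜) (Flat 𝒜) ℝ) S X := by rw [mul_eq_one_comm.1 hMζ]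
  simpa [Matrix.mul_apply, Matrix.one_apply, M, ζ] using hζM

open Classical in
theorem IsCharacteristic.sum_supp_eq {d : ℕ} {w : Face 𝒜 → ℝ} {t : ℝ}
    (hw : IsCharacteristic 𝒜 d w t) {μ : Flat 𝒜 → Flat 𝒜 → ℝ} (hμ : IsMoebius 𝒜 μ) (X : Flat 𝒜) :
    ∑ F, (if supp 𝒜 F = X then w F else 0) = charPolyUnder 𝒜 μ d X t := by
  calc ∑ F, (if supp 𝒜 F = X then w F else 0)
      = ∑ F, ∑ Y, (if supp 𝒜 F ≤ Y then μ Y X else 0) * w F := by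
        simp only [← sum_mul, hμ.sum_Ici]
        simp only [ite_mul, one_mul, zero_mul]
    _ = ∑ Y, μ Y X * ∑ F, if supp 𝒜 F ≤ Y then w F else 0 := by
        rw [sum_comm]
        simp only [mul_sum, ite_mul, mul_ite, zero_mul, mul_zero]
    _ = charPolyUnder 𝒜 μ d X t := by
        refine Fintype.sum_congr _ _ fun Y => ?_
        rw [show (∑ F, if supp 𝒜 F ≤ Y then w F else 0) = t ^ (dimS Y.1 - d) from hw Y]
        split_ifs with hYX
        · rfl
        · rw [hμ.2.2 Y X hYX, zero_mul]

theorem supp_eq_topFlat_iff (h𝒜 : ∀ ℓ ∈ 𝒜, ℓ ≠ 0) {F : Face 𝒜} :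
    supp 𝒜 F = topFlat 𝒜 ↔ IsChamber 𝒜 F := by
  refine ⟨fun h ℓ hℓ => h𝒜 ℓ.1 ℓ.2 ?_, fun h => ?_⟩
  · ext x
    have hx : x ∈ (supp 𝒜 F).1 := h ▸ Set.mem_univ x
    exact Set.mem_iInter₂.1 hx ℓ hℓ
  · exact Subtype.ext <| Set.eq_univ_of_forall fun x =>
      Set.mem_iInter₂.2 fun ℓ hℓ => absurd hℓ (h ℓ)

theorem lineal_recessionCone_carrier (F : Face 𝒜) :
    (recessionCone F.carrier).lineal = dirL 𝒜 :=
  lineal_recessionCone_signCell F.nonempty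

theorem essBounded_iff_isLinearCone (F : Face 𝒜) :
    EssBounded 𝒜 F ↔ IsLinearCone (recessionCone F.carrier) := by
  rw [EssBounded, ← lineal_recessionCone_carrier F]
  exact isBounded_mkQ_image_signCell_iff F.nonempty

open Classical in
theorem cellWeight_of_isChamber {F : Face 𝒜} (hF : IsChamber 𝒜 F) :
    cellWeight F.carrier =
      if EssBounded 𝒜 F then (-1) ^ (n - Module.finrank ℝ (dirL 𝒜)) else 0 := by
  have hspan : vectorSpan ℝ F.carrier = ⊤ := vectorSpan_signCell_eq_top F.nonempty hF
  have hle : Module.finrank ℝ (dirL 𝒜) ≤ n := by simpa using (dirL 𝒜).finrank_le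
  have hpow : (-1 : ℝ) ^ n * (-1) ^ Module.finrank ℝ (dirL 𝒜) =
      (-1) ^ (n - Module.finrank ℝ (dirL 𝒜)) := by
    rw [← pow_sub_mul_pow _ hle, mul_assoc, ← mul_pow, neg_one_mul, neg_neg, one_pow, mul_one]
  rw [cellWeight_of_nonempty (C := F.carrier) F.nonempty, hspan, finrank_top,
    finrank_euclideanSpace_fin, coneEuler, lineal_recessionCone_carrier,
    ← essBounded_iff_isLinearCone, mul_ite, mul_zero, hpow]

open Classical in
theorem sum_cellWeight_eq_card (h𝒜 : ∀ ℓ ∈ 𝒜, ℓ ≠ 0) :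
    ∑ F : Face 𝒜, (if supp 𝒜 F = topFlat 𝒜 then cellWeight F.carrier else 0) =
      (-1) ^ (n - Module.finrank ℝ (dirL 𝒜)) *
        #{C : Face 𝒜 | IsChamber 𝒜 C ∧ EssBounded 𝒜 C} := by
  simp only [supp_eq_topFlat_iff h𝒜]
  rw [← sum_filter, sum_congr rfl fun F hF => cellWeight_of_isChamber (mem_filter.1 hF).2,
    ← sum_filter, filter_filter, sum_const, nsmul_eq_mul, mul_comm]

theorem charPolyUnder_topFlat_one (μ : Flat 𝒜 → Flat 𝒜 → ℝ) (d : ℕ) :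
    charPolyUnder 𝒜 μ d (topFlat 𝒜) 1 = ∑ Y, μ Y (topFlat 𝒜) := by
  refine Fintype.sum_congr _ _ fun Y => ?_
  have hY : Y ≤ topFlat 𝒜 := Set.subset_univ Y.1
  rw [if_pos hY, one_pow, mul_one]

end Arrangement

open Classical in
/-- **Zaslavsky's formula for bounded regions.** The number of essentially bounded
chambers of `𝒜` equals `(-1)^{rk 𝒜} χ(𝒜, 1) = (-1)^{rk 𝒜} Σ_Y μ(Y, ⊤)`,
where `rk 𝒜 = n - d` and `d = dim L`. -/
theorem zaslavsky_bounded_chambers {n : ℕ} (𝒜 : Finset (AffForm n))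
    (h𝒜 : ∀ ℓ ∈ 𝒜, ℓ.linear ≠ 0)
    (μ : Flat 𝒜 → Flat 𝒜 → ℝ) (hμ : IsMoebius 𝒜 μ) :
    ((univ.filter (fun C : Face 𝒜 => IsChamber 𝒜 C ∧ EssBounded 𝒜 C)).card : ℝ)
        = (-1 : ℝ) ^ (n - Module.finrank ℝ (dirL 𝒜)) *
            charPolyUnder 𝒜 μ (Module.finrank ℝ (dirL 𝒜)) (topFlat 𝒜) 1 ∧
    ((univ.filter (fun C : Face 𝒜 => IsChamber 𝒜 C ∧ EssBounded 𝒜 C)).card : ℝ)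
        = (-1 : ℝ) ^ (n - Module.finrank ℝ (dirL 𝒜)) * ∑ Y : Flat 𝒜, μ Y (topFlat 𝒜) := by
  have hχ : charPolyUnder 𝒜 μ (Module.finrank ℝ (dirL 𝒜)) (topFlat 𝒜) 1 =
      (-1) ^ (n - Module.finrank ℝ (dirL 𝒜)) *
        #{C : Face 𝒜 | IsChamber 𝒜 C ∧ EssBounded 𝒜 C} := by
    rw [← (isCharacteristic_cellWeight _).sum_supp_eq hμ,
      sum_cellWeight_eq_card fun ℓ hℓ h0 => h𝒜 ℓ hℓ (by rw [h0, AffineMap.zero_linear])]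
  rw [← charPolyUnder_topFlat_one μ (Module.finrank ℝ (dirL 𝒜)), hχ, ← mul_assoc, ← mul_pow,
    neg_one_mul, neg_neg, one_pow, one_mul]
  exact ⟨rfl, rfl⟩

end CharElts
end
end

section
/- (Kung's identity) For any hyperplane arrangement 𝒜 in ℝ^n and all s, t ∈ ℝ: χ(𝒜, st) = Σ_X t^{rk(X)} χ(𝒜^X, s) χ(𝒜_X, t), where the sum is over all flats X of 𝒜, and χ(𝒜_X, t) = Σ_{Y flat of 𝒜, X ⊆ Y} μ(Y, ⊤) t^{rk(Y) − rk(X)} is the characteristic polynomial of the subarrangement 𝒜_X = {H ∈ 𝒜 : X ⊆ H}. -/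
open Finset MeasureTheory

noncomputable section

namespace CharElts

variable {n : ℕ} (𝒜 : Finset (AffForm n))

/-! By Möbius inversion, `∑_{X ≤ Y} χ(𝒜^X, s) = s ^ rk Y` for every flat `Y`. Interchanging the sums
over `X` and `Y` on the right-hand side of Kung's identity therefore turns it into
`∑_Y s ^ rk Y * μ(Y, ⊤) * t ^ rk Y`. -/

section LocallyFinite

open IncidenceAlgebra

variable {α R : Type*}

lemma sum_Iic_sum_Iic_comm {M : Type*} [AddCommMonoid M] [Preorder α] [LocallyFiniteOrder α]
    [LocallyFiniteOrderBot α] (f : α → α → M) (a : α) :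
    ∑ y ∈ Iic a, ∑ x ∈ Iic y, f x y = ∑ x ∈ Iic a, ∑ y ∈ Icc x a, f x y :=
  sum_comm' fun y x => by
    simp only [mem_Iic, mem_Icc]
    exact ⟨fun h => ⟨⟨h.2, h.1⟩, h.2.trans h.1⟩, fun h => ⟨h.1.2, h.1.1⟩⟩

variable [PartialOrder α] [LocallyFiniteOrder α] [DecidableEq α]

lemma eq_mu_of_sum_Icc_eq [Ring R] {f : IncidenceAlgebra R α}
    (hf : ∀ a b, a ≤ b → ∑ x ∈ Icc a b, f a x = if a = b then 1 else 0) : f = mu R := by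
  classical
  have mul_zeta : f * zeta R = 1 := by
    ext a b hab
    rw [mul_apply, one_apply, ← hf a b hab]
    refine sum_congr rfl fun x hx => ?_
    rw [zeta_of_le (mem_Icc.1 hx).2, mul_one]
  exact left_inv_eq_right_inv mul_zeta zeta_mul_mu

variable [LocallyFiniteOrderBot α]

lemma sum_Iic_sum_Iic_mul_mu [Ring R] (f : α → R) (a : α) :
    ∑ x ∈ Iic a, ∑ z ∈ Iic x, f z * mu R z x = f a := by
  simp_rw [sum_Iic_sum_Iic_comm, ← mul_sum, sum_Icc_mu_right, mul_ite, mul_one, mul_zero]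
  rw [sum_ite_eq', if_pos (mem_Iic.2 le_rfl)]

lemma sum_Iic_mul_mul_mu [Ring R] (f g : α → R) (a : α) :
    ∑ y ∈ Iic a, f y * (g y * mu R y a)
      = ∑ x ∈ Iic a, (∑ z ∈ Iic x, f z * mu R z x) * ∑ y ∈ Icc x a, g y * mu R y a := by
  calc ∑ y ∈ Iic a, f y * (g y * mu R y a)
    _ = ∑ y ∈ Iic a, ∑ x ∈ Iic y, (∑ z ∈ Iic x, f z * mu R z x) * (g y * mu R y a) := by
        simp_rw [← sum_mul, sum_Iic_sum_Iic_mul_mu]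
    _ = ∑ x ∈ Iic a, ∑ y ∈ Icc x a, (∑ z ∈ Iic x, f z * mu R z x) * (g y * mu R y a) :=
        sum_Iic_sum_Iic_comm _ a
    _ = ∑ x ∈ Iic a, (∑ z ∈ Iic x, f z * mu R z x) * ∑ y ∈ Icc x a, g y * mu R y a := by
        simp_rw [mul_sum]

theorem kung_identity_general [CommRing R] {r : α → ℕ} (hr : Monotone r) (a : α) (s t : R) :
    ∑ y ∈ Iic a, mu R y a * (s * t) ^ r y
      = ∑ x ∈ Iic a, t ^ r x * (∑ z ∈ Iic x, mu R z x * s ^ r z) *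
          ∑ y ∈ Icc x a, mu R y a * t ^ (r y - r x) := by
  have pull_rank (x : α) : t ^ r x * ∑ y ∈ Icc x a, mu R y a * t ^ (r y - r x)
      = ∑ y ∈ Icc x a, t ^ r y * mu R y a := by
    rw [mul_sum]
    refine sum_congr rfl fun y hy => ?_
    rw [← pow_mul_pow_sub t (hr (mem_Icc.1 hy).1)]
    ring
  calc ∑ y ∈ Iic a, mu R y a * (s * t) ^ r y
    _ = ∑ y ∈ Iic a, s ^ r y * (t ^ r y * mu R y a) :=
        sum_congr rfl fun y _ => by ring
    _ = ∑ x ∈ Iic a, (∑ z ∈ Iic x, s ^ r z * mu R z x) * ∑ y ∈ Icc x a, t ^ r y * mu R y a :=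
        sum_Iic_mul_mul_mu _ _ a
    _ = ∑ x ∈ Iic a, t ^ r x * (∑ z ∈ Iic x, mu R z x * s ^ r z) *
          ∑ y ∈ Icc x a, mu R y a * t ^ (r y - r x) :=
        sum_congr rfl fun x _ => by simp_rw [← pull_rank, mul_comm (s ^ _)]; ring

end LocallyFinite

lemma dimS_mono {X Y : Set (V n)} (h : X ⊆ Y) : dimS X ≤ dimS Y :=
  Submodule.finrank_mono (vectorSpan_mono ℝ h)

instance : OrderTop (Flat 𝒜) where
  top := topFlat 𝒜
  le_top X := Set.subset_univ X.1

lemma topFlat_eq_top : topFlat 𝒜 = ⊤ := rfl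

lemma monotone_dimS_sub (d : ℕ) : Monotone fun X : Flat 𝒜 => dimS X.1 - d :=
  fun _ _ h => Nat.sub_le_sub_right (dimS_mono h) d

open Classical in
instance : LocallyFiniteOrder (Flat 𝒜) := Fintype.toLocallyFiniteOrder

open Classical in
instance : LocallyFiniteOrderBot (Flat 𝒜) :=
  LocallyFiniteOrderBot.ofIic (Flat 𝒜) (fun X => {Y | Y ≤ X}) (by simp)

variable {𝒜} in
open Classical in
lemma IsMoebius.eq_mu {μ : Flat 𝒜 → Flat 𝒜 → ℝ} (hμ : IsMoebius 𝒜 μ) :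
    μ = IncidenceAlgebra.mu ℝ := by
  obtain ⟨h_self, h_sum, h_not_le⟩ := hμ
  let M : IncidenceAlgebra ℝ (Flat 𝒜) := ⟨μ, fun X Y => h_not_le X Y⟩
  suffices M = IncidenceAlgebra.mu ℝ from congrArg DFunLike.coe this
  refine eq_mu_of_sum_Icc_eq fun X Y hXY => ?_
  rcases hXY.eq_or_lt with rfl | hlt
  · simpa using! h_self X
  · rw [if_neg hlt.ne, ← h_sum X Y hlt, ← sum_filter, filter_le_le_eq_Icc]
    rfl

open Classical in
/-- **Kung's identity.**
`χ(𝒜, st) = Σ_X t^{rk X} χ(𝒜^X, s) χ(𝒜_X, t)`, where the sum is over all flats `X`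
and `χ(𝒜_X, t) = Σ_{Y ⊇ X} μ(Y, ⊤) t^{rk Y - rk X}` is the characteristic polynomial
of the arrangement over `X`. -/
theorem kung_identity {n : ℕ} (𝒜 : Finset (AffForm n))
    (h𝒜 : ∀ ℓ ∈ 𝒜, ℓ.linear ≠ 0)
    (d : ℕ) (hd : ∀ X : Flat 𝒜, IsMin X → dimS X.1 = d)
    (μ : Flat 𝒜 → Flat 𝒜 → ℝ) (hμ : IsMoebius 𝒜 μ)
    (s t : ℝ) :
    charPolyUnder 𝒜 μ d (topFlat 𝒜) (s * t)
      = ∑ X : Flat 𝒜, t ^ (dimS X.1 - d) * charPolyUnder 𝒜 μ d X s *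
          (∑ Y : Flat 𝒜, if X ≤ Y then
            μ Y (topFlat 𝒜) * t ^ ((dimS Y.1 - d) - (dimS X.1 - d)) else 0) := by
  obtain rfl := hμ.eq_mu
  simpa only [charPolyUnder, topFlat_eq_top, ← sum_filter, filter_ge_eq_Iic, filter_le_eq_Ici,
    Iic_top, Icc_top] using kung_identity_general (monotone_dimS_sub 𝒜 d) ⊤ s t

end CharElts
end
end
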